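/- arXiv:2310.10173 — 2 statements merged into one kernel-verified Lean document; each statement's English description precedes it below -/
import Mathlib

section
/- There exists a constant C > 0 such that for every ε ∈ (0,1) there exists a smooth function h_ε : (−1/(4ε), 1/(4ε)) → ℝ with the following properties: (i) (4/3)·h_ε(t)² + 2·h_ε′(t) = 12ε² for every t ∈ (−1/(4ε), −1/8] ∪ [1/8, 1/(4ε)); (ii) |(4/3)·h_ε(t)² + 2·h_ε′(t)| ≤ C·ε for every t ∈ [−1/8, 1/8]; (iii) h_ε′(t) < 0 for every t ∈ (−1/(4ε), 1/(4ε)); (iv) h_ε(t) → +∞ as t → (−1/(4ε))⁺ and h_ε(t) → −∞ as t → (1/(4ε))⁻; (v) h_ε(t) < 0 for every t ∈ [1/8, 1/(4ε)). -/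
/-!
For each `c` the function `y = coth (a (t - c))` solves the Riccati equation `y' = a (1 - y²)`, and
it satisfies `y² > 1`. Between the solutions `A > 0` with pole at `-r` and `B < 0` with pole at `r`
pass with a smooth monotone step `χ`: the function `y = (1 - χ) A + χ B` has
`y' = a (1 - ((1 - χ) A² + χ B²)) - χ' (A - B) < 0`. It fails to solve the equation only where `χ`
varies, and its defect there is `-(a χ (1 - χ) (A - B)² + χ' (A - B))`. For `a = 2ε`, `r = 1/(4ε)`
and `h = 3ε y` one has `(4/3) h² + 2 h' = 12 ε² + 6ε (y' - a (1 - y²))`. On a step region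
`|t| ≤ δ` the arguments of `coth` have absolute value at least `a (r - δ) = 1/2 - 2εδ`, which stays
away from `0`, so the defect is bounded independently of `ε`.
-/

open Filter Set Topology

/-- The hyperbolic cotangent, with the junk value `coth 0 = 0`. -/
noncomputable def coth (x : ℝ) : ℝ := Real.cosh x / Real.sinh x

section Coth

variable {x : ℝ}

lemma coth_neg (x : ℝ) : coth (-x) = -coth x := by
  simp [coth, div_neg]

lemma one_lt_coth (hx : 0 < x) : 1 < coth x :=
  (one_lt_div (Real.sinh_pos_iff.2 hx)).2 (Real.sinh_lt_cosh x)

lemma coth_pos (hx : 0 < x) : 0 < coth x :=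
  one_pos.trans (one_lt_coth hx)

lemma coth_neg_of_neg (hx : x < 0) : coth x < 0 := by
  simpa [coth_neg] using coth_pos (neg_pos.2 hx)

lemma one_lt_coth_sq (hx : x ≠ 0) : 1 < coth x ^ 2 := by
  rcases hx.lt_or_gt with hneg | hpos
  · simpa [coth_neg] using one_lt_pow₀ (one_lt_coth (neg_pos.2 hneg)) two_ne_zero
  · exact one_lt_pow₀ (one_lt_coth hpos) two_ne_zero

lemma antitoneOn_coth : AntitoneOn coth (Ioi 0) := by
  intro x hx y hy hxy
  have hsinh : 0 ≤ Real.sinh (y - x) := Real.sinh_nonneg_iff.2 (sub_nonneg.2 hxy)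
  rw [Real.sinh_sub] at hsinh
  rw [coth, coth, div_le_div_iff₀ (Real.sinh_pos_iff.2 hy) (Real.sinh_pos_iff.2 hx)]
  linarith

lemma hasDerivAt_coth (hx : x ≠ 0) : HasDerivAt coth (1 - coth x ^ 2) x := by
  have hsinh : Real.sinh x ≠ 0 := Real.sinh_ne_zero.2 hx
  refine ((Real.hasDerivAt_cosh x).div (Real.hasDerivAt_sinh x) hsinh).congr_deriv ?_
  rw [coth]
  field_simp

lemma contDiffAt_coth {n : WithTop ℕ∞} (hx : x ≠ 0) : ContDiffAt ℝ n coth x :=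
  Real.contDiff_cosh.contDiffAt.div Real.contDiff_sinh.contDiffAt (Real.sinh_ne_zero.2 hx)

lemma tendsto_coth_nhdsGT_zero : Tendsto coth (𝓝[>] 0) atTop := by
  have hcosh : Tendsto Real.cosh (𝓝[>] 0) (𝓝 1) :=
    (Real.continuous_cosh.tendsto' 0 1 Real.cosh_zero).mono_left nhdsWithin_le_nhds
  have hsinh : Tendsto Real.sinh (𝓝[>] 0) (𝓝[>] 0) :=
    tendsto_nhdsWithin_iff.2
      ⟨(Real.continuous_sinh.tendsto' 0 0 Real.sinh_zero).mono_left nhdsWithin_le_nhds,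
      eventually_mem_nhdsWithin.mono fun _ ↦ Real.sinh_pos_iff.2⟩
  exact hcosh.pos_mul_atTop one_pos (tendsto_inv_nhdsGT_zero.comp hsinh)

lemma tendsto_coth_nhdsLT_zero : Tendsto coth (𝓝[<] 0) atBot := by
  have hneg : Tendsto (fun x : ℝ ↦ -x) (𝓝[<] 0) (𝓝[>] 0) := by
    simpa using tendsto_neg_nhdsLT (a := (0 : ℝ))
  refine (tendsto_neg_atTop_atBot.comp (tendsto_coth_nhdsGT_zero.comp hneg)).congr fun x ↦ ?_
  simp [coth_neg]

end Coth

/-- A smooth monotone transition from the value `0` on `(-∞, -δ]` to the value `1` on `[δ, ∞)`. -/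
structure IsSmoothStep (δ : ℝ) (χ : ℝ → ℝ) : Prop where
  contDiff : ContDiff ℝ (⊤ : ℕ∞) χ
  monotone : Monotone χ
  eq_zero : ∀ t ≤ -δ, χ t = 0
  eq_one : ∀ t, δ ≤ t → χ t = 1

lemma exists_isSmoothStep {δ : ℝ} (hδ : 0 < δ) : ∃ χ, IsSmoothStep δ χ := by
  refine ⟨fun t ↦ Real.smoothTransition ((t + δ) / (2 * δ)),
    Real.smoothTransition.contDiff.comp (by fun_prop),
    Real.smoothTransition.monotone.comp fun s t hst ↦ by gcongr,
    fun t ht ↦ Real.smoothTransition.zero_of_nonpos ?_,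
    fun t ht ↦ Real.smoothTransition.one_of_one_le ?_⟩
  · exact div_nonpos_of_nonpos_of_nonneg (by linarith) (by positivity)
  · exact (one_le_div (by positivity)).2 (by linarith)

namespace IsSmoothStep

variable {δ t : ℝ} {χ : ℝ → ℝ}

lemma nonneg (hχ : IsSmoothStep δ χ) (t : ℝ) : 0 ≤ χ t :=
  (hχ.eq_zero _ (min_le_right t (-δ))).ge.trans (hχ.monotone (min_le_left t (-δ)))

lemma le_one (hχ : IsSmoothStep δ χ) (t : ℝ) : χ t ≤ 1 :=
  (hχ.monotone (le_max_left t δ)).trans (hχ.eq_one _ (le_max_right t δ)).le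

lemma differentiable (hχ : IsSmoothStep δ χ) : Differentiable ℝ χ :=
  hχ.contDiff.differentiable (by simp)

lemma deriv_eq_zero_of_le_neg (hχ : IsSmoothStep δ χ) (ht : t ≤ -δ) : deriv χ t = 0 :=
  IsLocalMin.deriv_eq_zero <| Eventually.of_forall fun s ↦ hχ.eq_zero t ht ▸ hχ.nonneg s

lemma deriv_eq_zero_of_ge (hχ : IsSmoothStep δ χ) (ht : δ ≤ t) : deriv χ t = 0 :=
  IsLocalMax.deriv_eq_zero <| Eventually.of_forall fun s ↦ hχ.eq_one t ht ▸ hχ.le_one s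

lemma exists_deriv_le (hχ : IsSmoothStep δ χ) : ∃ M, 0 ≤ M ∧ ∀ t ∈ Icc (-δ) δ, deriv χ t ≤ M := by
  obtain ⟨M, hM⟩ := isCompact_Icc.exists_bound_of_continuousOn
    (hχ.contDiff.continuous_deriv (by simp)).continuousOn
  exact ⟨|M|, abs_nonneg M, fun t ht ↦ (le_abs_self _).trans ((hM t ht).trans (le_abs_self M))⟩

end IsSmoothStep

lemma hasDerivAt_interpolation_of_riccati {χ A B : ℝ → ℝ} {χ' a t : ℝ} (hχ : HasDerivAt χ χ' t)
    (hA : HasDerivAt A (a * (1 - A t ^ 2)) t) (hB : HasDerivAt B (a * (1 - B t ^ 2)) t) :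
    HasDerivAt (fun s ↦ (1 - χ s) * A s + χ s * B s)
      (a * (1 - ((1 - χ t) * A t ^ 2 + χ t * B t ^ 2)) - χ' * (A t - B t)) t :=
  (((hχ.const_sub 1).mul hA).add (hχ.mul hB)).congr_deriv (by ring)

/-- The interpolation along `χ` between the solutions `coth (a (t + r))` and `coth (a (t - r))` of
the Riccati equation `y' = a (1 - y²)`; on `(-r, r)` it runs from the pole of the first to the pole
of the second. -/
noncomputable def cothBridge (χ : ℝ → ℝ) (a r t : ℝ) : ℝ :=
  (1 - χ t) * coth (a * (t + r)) + χ t * coth (a * (t - r))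

namespace cothBridge

variable {χ : ℝ → ℝ} {a r t δ : ℝ}

lemma eq_of_le_neg (hχ : IsSmoothStep δ χ) (ht : t ≤ -δ) :
    cothBridge χ a r t = coth (a * (t + r)) := by
  simp [cothBridge, hχ.eq_zero t ht]

lemma eq_of_ge (hχ : IsSmoothStep δ χ) (ht : δ ≤ t) :
    cothBridge χ a r t = coth (a * (t - r)) := by
  simp [cothBridge, hχ.eq_one t ht]

lemma mul_add_pos (ha : 0 < a) (ht : t ∈ Ioo (-r) r) : 0 < a * (t + r) :=
  mul_pos ha (by linarith [ht.1])

lemma mul_sub_neg (ha : 0 < a) (ht : t ∈ Ioo (-r) r) : a * (t - r) < 0 :=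
  mul_neg_of_pos_of_neg ha (sub_neg.2 ht.2)

lemma contDiffOn {n : WithTop ℕ∞} (hχ : ContDiff ℝ n χ) (ha : 0 < a) :
    ContDiffOn ℝ n (cothBridge χ a r) (Ioo (-r) r) := by
  intro t ht
  have hA : ContDiffAt ℝ n (fun s ↦ coth (a * (s + r))) t :=
    (contDiffAt_coth (mul_add_pos ha ht).ne').comp t (f := fun s ↦ a * (s + r)) (by fun_prop)
  have hB : ContDiffAt ℝ n (fun s ↦ coth (a * (s - r))) t :=
    (contDiffAt_coth (mul_sub_neg ha ht).ne).comp t (f := fun s ↦ a * (s - r)) (by fun_prop)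
  exact (((contDiffAt_const.sub hχ.contDiffAt).mul hA).add
    (hχ.contDiffAt.mul hB)).contDiffWithinAt

lemma deriv_eq (hχ : DifferentiableAt ℝ χ t) (ha : 0 < a) (ht : t ∈ Ioo (-r) r) :
    deriv (cothBridge χ a r) t =
      a * (1 - ((1 - χ t) * coth (a * (t + r)) ^ 2 + χ t * coth (a * (t - r)) ^ 2)) -
        deriv χ t * (coth (a * (t + r)) - coth (a * (t - r))) := by
  have hA : HasDerivAt (fun s ↦ coth (a * (s + r))) (a * (1 - coth (a * (t + r)) ^ 2)) t := by
    simpa [mul_comm] using! (hasDerivAt_coth (mul_add_pos ha ht).ne').comp t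
      (((hasDerivAt_id t).add_const r).const_mul a)
  have hB : HasDerivAt (fun s ↦ coth (a * (s - r))) (a * (1 - coth (a * (t - r)) ^ 2)) t := by
    simpa [mul_comm] using! (hasDerivAt_coth (mul_sub_neg ha ht).ne).comp t
      (((hasDerivAt_id t).sub_const r).const_mul a)
  exact (hasDerivAt_interpolation_of_riccati hχ.hasDerivAt hA hB).deriv

lemma riccati_defect (hχ : DifferentiableAt ℝ χ t) (ha : 0 < a) (ht : t ∈ Ioo (-r) r) :
    deriv (cothBridge χ a r) t - a * (1 - cothBridge χ a r t ^ 2) =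
      -(a * (χ t * (1 - χ t)) * (coth (a * (t + r)) - coth (a * (t - r))) ^ 2 +
        deriv χ t * (coth (a * (t + r)) - coth (a * (t - r)))) := by
  rw [deriv_eq hχ ha ht, cothBridge]
  ring

lemma riccati_defect_eq_zero (hχ : IsSmoothStep δ χ) (ha : 0 < a) (ht : t ∈ Ioo (-r) r)
    (hδ : t ≤ -δ ∨ δ ≤ t) :
    deriv (cothBridge χ a r) t - a * (1 - cothBridge χ a r t ^ 2) = 0 := by
  rw [riccati_defect (hχ.differentiable t) ha ht]
  rcases hδ with h | h
  · simp [hχ.eq_zero t h, hχ.deriv_eq_zero_of_le_neg h]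
  · simp [hχ.eq_one t h, hχ.deriv_eq_zero_of_ge h]

lemma abs_riccati_defect_le {m M : ℝ} (hχ : IsSmoothStep δ χ) (ha : 0 < a) (hm : 0 < m)
    (hmδ : m ≤ a * (r - δ)) (ht : t ∈ Icc (-δ) δ) (hM : deriv χ t ≤ M) :
    |deriv (cothBridge χ a r) t - a * (1 - cothBridge χ a r t ^ 2)| ≤
      a * coth m ^ 2 + 2 * M * coth m := by
  have hδr : δ < r := sub_pos.1 ((mul_pos_iff_of_pos_left ha).1 (hm.trans_le hmδ))
  have htr : t ∈ Ioo (-r) r := ⟨(neg_lt_neg hδr).trans_le ht.1, ht.2.trans_lt hδr⟩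
  rw [riccati_defect (hχ.differentiable t) ha htr, abs_neg]
  set D := coth (a * (t + r)) - coth (a * (t - r)) with hD
  have hA : coth (a * (t + r)) ≤ coth m :=
    antitoneOn_coth hm (mul_add_pos ha htr) (by nlinarith [ht.1])
  have hB : -coth (a * (t - r)) ≤ coth m := by
    rw [← coth_neg]
    exact antitoneOn_coth hm (neg_pos.2 (mul_sub_neg ha htr)) (by nlinarith [ht.2])
  have hD0 : 0 ≤ D :=
    sub_nonneg.2 ((coth_neg_of_neg (mul_sub_neg ha htr)).trans (coth_pos (mul_add_pos ha htr))).le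
  have hDle : D ≤ 2 * coth m := by
    rw [hD]
    linarith
  have hχ0 : 0 ≤ χ t * (1 - χ t) := mul_nonneg (hχ.nonneg t) (sub_nonneg.2 (hχ.le_one t))
  have hχ4 : χ t * (1 - χ t) ≤ 1 / 4 := by nlinarith [sq_nonneg (2 * χ t - 1)]
  have hχ' : 0 ≤ deriv χ t := hχ.monotone.deriv_nonneg
  rw [abs_of_nonneg (by positivity)]
  calc a * (χ t * (1 - χ t)) * D ^ 2 + deriv χ t * D
      ≤ a * (1 / 4) * (2 * coth m) ^ 2 + M * (2 * coth m) := by gcongr; exact hχ'.trans hM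
    _ = a * coth m ^ 2 + 2 * M * coth m := by ring

lemma deriv_neg (hχ : IsSmoothStep δ χ) (ha : 0 < a) (ht : t ∈ Ioo (-r) r) :
    deriv (cothBridge χ a r) t < 0 := by
  have hA := mul_add_pos ha ht
  have hB := mul_sub_neg ha ht
  have hsq : 1 < (1 - χ t) * coth (a * (t + r)) ^ 2 + χ t * coth (a * (t - r)) ^ 2 :=
    convex_Ioi (1 : ℝ) (one_lt_coth_sq hA.ne') (one_lt_coth_sq hB.ne)
      (sub_nonneg.2 (hχ.le_one t)) (hχ.nonneg t) (by ring)
  have hstep : 0 ≤ deriv χ t * (coth (a * (t + r)) - coth (a * (t - r))) :=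
    mul_nonneg hχ.monotone.deriv_nonneg
      (sub_nonneg.2 ((coth_neg_of_neg hB).trans (coth_pos hA)).le)
  rw [deriv_eq (hχ.differentiable t) ha ht]
  linarith [mul_neg_of_pos_of_neg ha (sub_neg.2 hsq)]

lemma neg_of_ge (hχ : IsSmoothStep δ χ) (ha : 0 < a) (ht : t ∈ Ico δ r) :
    cothBridge χ a r t < 0 := by
  rw [eq_of_ge hχ ht.1]
  exact coth_neg_of_neg (mul_neg_of_pos_of_neg ha (sub_neg.2 ht.2))

lemma tendsto_atTop (hχ : IsSmoothStep δ χ) (ha : 0 < a) (hδr : δ < r) :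
    Tendsto (cothBridge χ a r) (𝓝[>] (-r)) atTop := by
  have harg : Tendsto (fun t ↦ a * (t + r)) (𝓝[>] (-r)) (𝓝[>] 0) := by
    refine tendsto_nhdsWithin_iff.2 ⟨?_, eventually_mem_nhdsWithin.mono fun t ht ↦
      mul_pos ha (neg_lt_iff_pos_add.1 ht)⟩
    exact (Continuous.tendsto' (by fun_prop) _ _ (by simp)).mono_left nhdsWithin_le_nhds
  refine (tendsto_coth_nhdsGT_zero.comp harg).congr' ?_
  filter_upwards [nhdsWithin_le_nhds (Iio_mem_nhds (neg_lt_neg hδr))] with t ht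
  exact (eq_of_le_neg hχ (le_of_lt ht)).symm

lemma tendsto_atBot (hχ : IsSmoothStep δ χ) (ha : 0 < a) (hδr : δ < r) :
    Tendsto (cothBridge χ a r) (𝓝[<] r) atBot := by
  have harg : Tendsto (fun t ↦ a * (t - r)) (𝓝[<] r) (𝓝[<] 0) := by
    refine tendsto_nhdsWithin_iff.2 ⟨?_, eventually_mem_nhdsWithin.mono fun t ht ↦
      mul_neg_of_pos_of_neg ha (sub_neg.2 ht)⟩
    exact (Continuous.tendsto' (by fun_prop) _ _ (by simp)).mono_left nhdsWithin_le_nhds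
  refine (tendsto_coth_nhdsLT_zero.comp harg).congr' ?_
  filter_upwards [nhdsWithin_le_nhds (Ioi_mem_nhds hδr)] with t ht
  exact (eq_of_ge hχ (le_of_lt ht)).symm

end cothBridge

/-- The function `h_ε`: the rescaling of `cothBridge` that turns `y' = a (1 - y²)` into
`(4/3) h² + 2 h' = 12 ε²`, with poles at `±1/(4ε)`. -/
noncomputable def bubbleFun (χ : ℝ → ℝ) (ε t : ℝ) : ℝ :=
  3 * ε * cothBridge χ (2 * ε) (1 / (4 * ε)) t

namespace bubbleFun

variable {χ : ℝ → ℝ} {δ ε t : ℝ}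

lemma deriv_eq (χ : ℝ → ℝ) (ε t : ℝ) :
    deriv (bubbleFun χ ε) t = 3 * ε * deriv (cothBridge χ (2 * ε) (1 / (4 * ε))) t :=
  deriv_const_mul_field _

lemma riccati_eq_add_defect (χ : ℝ → ℝ) (ε t : ℝ) :
    (4 / 3) * bubbleFun χ ε t ^ 2 + 2 * deriv (bubbleFun χ ε) t =
      12 * ε ^ 2 + 6 * ε * (deriv (cothBridge χ (2 * ε) (1 / (4 * ε))) t -
        2 * ε * (1 - cothBridge χ (2 * ε) (1 / (4 * ε)) t ^ 2)) := by
  rw [deriv_eq, bubbleFun]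
  ring

lemma riccati_eq (hχ : IsSmoothStep δ χ) (hε : 0 < ε)
    (ht : t ∈ Ioo (-(1 / (4 * ε))) (1 / (4 * ε))) (hδ : t ≤ -δ ∨ δ ≤ t) :
    (4 / 3) * bubbleFun χ ε t ^ 2 + 2 * deriv (bubbleFun χ ε) t = 12 * ε ^ 2 := by
  rw [riccati_eq_add_defect, cothBridge.riccati_defect_eq_zero hχ (by positivity) ht hδ,
    mul_zero, add_zero]

lemma abs_riccati_le {ε₀ M : ℝ} (hχ : IsSmoothStep δ χ) (hε : 0 < ε) (hεε₀ : ε ≤ ε₀)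
    (hm : 0 < 1 / 2 - 2 * ε₀ * δ) (ht : t ∈ Icc (-δ) δ) (hM : deriv χ t ≤ M) :
    |(4 / 3) * bubbleFun χ ε t ^ 2 + 2 * deriv (bubbleFun χ ε) t| ≤
      12 * (ε₀ + ε₀ * coth (1 / 2 - 2 * ε₀ * δ) ^ 2 + M * coth (1 / 2 - 2 * ε₀ * δ)) * ε := by
  set K := coth (1 / 2 - 2 * ε₀ * δ)
  have hδ : 0 ≤ δ := by linarith [ht.1, ht.2]
  have hmδ : 1 / 2 - 2 * ε₀ * δ ≤ 2 * ε * (1 / (4 * ε) - δ) := by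
    have har : 2 * ε * (1 / (4 * ε)) = 1 / 2 := by field_simp; norm_num
    linarith [mul_le_mul_of_nonneg_right hεε₀ hδ]
  have hdefect := cothBridge.abs_riccati_defect_le hχ (mul_pos two_pos hε) hm hmδ ht hM
  rw [riccati_eq_add_defect]
  refine (abs_add_le _ _).trans ?_
  rw [abs_of_pos (by positivity), abs_mul, abs_of_pos (by positivity : 0 < 6 * ε)]
  calc 12 * ε ^ 2 + 6 * ε * |_|
      ≤ 12 * ε ^ 2 + 6 * ε * (2 * ε * K ^ 2 + 2 * M * K) := by gcongr
    _ = 12 * (ε + ε * K ^ 2 + M * K) * ε := by ring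
    _ ≤ 12 * (ε₀ + ε₀ * K ^ 2 + M * K) * ε := by gcongr

end bubbleFun

theorem stmt_0_general {δ ε₀ : ℝ} (hδ : 0 < δ) (hε₀ : 0 < ε₀) (hδε₀ : δ < 1 / (4 * ε₀)) :
    ∃ C : ℝ, 0 < C ∧ ∀ ε : ℝ, ε ∈ Ioo 0 ε₀ →
      ∃ h : ℝ → ℝ,
        ContDiffOn ℝ (⊤ : ℕ∞) h (Ioo (-(1 / (4 * ε))) (1 / (4 * ε))) ∧
        (∀ t ∈ Ioc (-(1 / (4 * ε))) (-δ) ∪ Ico δ (1 / (4 * ε)),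
          (4 / 3) * h t ^ 2 + 2 * deriv h t = 12 * ε ^ 2) ∧
        (∀ t ∈ Icc (-δ) δ, |(4 / 3) * h t ^ 2 + 2 * deriv h t| ≤ C * ε) ∧
        (∀ t ∈ Ioo (-(1 / (4 * ε))) (1 / (4 * ε)), deriv h t < 0) ∧
        Tendsto h (𝓝[>] (-(1 / (4 * ε)))) atTop ∧
        Tendsto h (𝓝[<] (1 / (4 * ε))) atBot ∧
        ∀ t ∈ Ico δ (1 / (4 * ε)), h t < 0 := by
  obtain ⟨χ, hχ⟩ := exists_isSmoothStep hδ
  obtain ⟨M, hM0, hM⟩ := hχ.exists_deriv_le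
  have hm : 0 < 1 / 2 - 2 * ε₀ * δ := by
    rw [lt_div_iff₀ (by positivity)] at hδε₀
    linarith
  have hK : 0 < coth (1 / 2 - 2 * ε₀ * δ) := coth_pos hm
  refine ⟨12 * (ε₀ + ε₀ * coth (1 / 2 - 2 * ε₀ * δ) ^ 2 + M * coth (1 / 2 - 2 * ε₀ * δ)),
    by positivity, fun ε ⟨hε, hεε₀⟩ ↦ ?_⟩
  have hδr : δ < 1 / (4 * ε) :=
    hδε₀.trans (one_div_lt_one_div_of_lt (by positivity) (by linarith))
  have ha : 0 < 2 * ε := by positivity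
  have hc : 0 < 3 * ε := by positivity
  refine ⟨bubbleFun χ ε, contDiffOn_const.mul (cothBridge.contDiffOn hχ.contDiff ha),
    fun t ht ↦ ?_, fun t ht ↦ bubbleFun.abs_riccati_le hχ hε hεε₀.le hm ht (hM t ht),
    fun t ht ↦ ?_, (cothBridge.tendsto_atTop hχ ha hδr).const_mul_atTop hc,
    (cothBridge.tendsto_atBot hχ ha hδr).const_mul_atBot hc,
    fun t ht ↦ mul_neg_of_pos_of_neg hc (cothBridge.neg_of_ge hχ ha ht)⟩
  · rcases ht with ⟨hrt, htδ⟩ | ⟨hδt, htr⟩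
    · exact bubbleFun.riccati_eq hχ hε ⟨hrt, by linarith⟩ (.inl htδ)
    · exact bubbleFun.riccati_eq hχ hε ⟨by linarith, htr⟩ (.inr hδt)
  · rw [bubbleFun.deriv_eq]
    exact mul_neg_of_pos_of_neg hc (cothBridge.deriv_neg hχ ha ht)

/-- Existence of the auxiliary functions `h_ε` (Lemma 2.3 of Zhu): there is a
universal constant `C > 0` such that for every `ε ∈ (0,1)` there is a smooth
function `h_ε` on `(−1/(4ε), 1/(4ε))` satisfying the ODE
`(4/3) h_ε² + 2 h_ε' = 12 ε²` outside `[−1/8, 1/8]`, the bound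
`|(4/3) h_ε² + 2 h_ε'| ≤ C ε` on `[−1/8, 1/8]`, `h_ε' < 0`, blow-up `±∞` at the
endpoints, and `h_ε < 0` on `[1/8, 1/(4ε))`. -/
theorem stmt_0 :
    ∃ C : ℝ, 0 < C ∧ ∀ ε : ℝ, ε ∈ Set.Ioo (0 : ℝ) 1 →
      ∃ h : ℝ → ℝ,
        ContDiffOn ℝ (⊤ : ℕ∞) h (Set.Ioo (-(1/(4*ε))) (1/(4*ε))) ∧
        (∀ t ∈ Set.Ioc (-(1/(4*ε))) (-(1/8) : ℝ) ∪ Set.Ico (1/8 : ℝ) (1/(4*ε)),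
          (4/3) * (h t)^2 + 2 * deriv h t = 12 * ε^2) ∧
        (∀ t ∈ Set.Icc (-(1/8) : ℝ) (1/8),
          |(4/3) * (h t)^2 + 2 * deriv h t| ≤ C * ε) ∧
        (∀ t ∈ Set.Ioo (-(1/(4*ε))) (1/(4*ε)), deriv h t < 0) ∧
        Filter.Tendsto h (nhdsWithin (-(1/(4*ε))) (Set.Ioi (-(1/(4*ε))))) Filter.atTop ∧
        Filter.Tendsto h (nhdsWithin (1/(4*ε)) (Set.Iio (1/(4*ε)))) Filter.atBot ∧
        (∀ t ∈ Set.Ico (1/8 : ℝ) (1/(4*ε)), h t < 0) :=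
  stmt_0_general (by norm_num) one_pos (by norm_num)
end

section
/- For every κ > 0, every T > 0, and all real numbers H₋ and H₊, there exist real numbers α < −T and β > T and a smooth function μ : [α, β] → ℝ such that: (i) μ′(t) ≤ 0 for all t ∈ [α, β]; (ii) μ(α) > H₋ and μ(β) < H₊; (iii) −(4/3)·μ(t)² − 2·μ′(t) ≤ 12κ for all t ∈ (−T, T); and (iv) −(4/3)·μ(t)² − 2·μ′(t) ≤ 0 for all t ∈ [α, −T] ∪ [T, β]. -/
/-!
The substitution `μ = (3/2) v' / v` linearises the Riccati expression: it gives
`-(4/3) μ² - 2 μ' = -3 v'' / v`. The three pieces `3 / (2 (t + a))`, `-3 √κ tan (2 √κ t)` and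
`-3 / (2 (b - t))` of the glued profile come from `v = t + a`, `v = cos (2 √κ t)` and `v = b - t`,
so smoothing the profile amounts to smoothing a concave tent. We take `v` smooth, concave and equal
to `b - |t|` for `T ≤ |t|`. Then `v'' = 0` outside `(-T, T)`, while increasing `b` leaves `v''`
unchanged and makes `v` large on `[-T, T]`, so that `-3 v'' / v ≤ 12 κ` there. The profile blows up
as `t` approaches the zeros `±b` of `v`, which meets any prescribed boundary values.
-/

open Set Filter
open scoped ContDiff

section LogDeriv

variable {𝕜 𝕜' : Type*} [NontriviallyNormedField 𝕜] [NontriviallyNormedField 𝕜']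
  [NormedAlgebra 𝕜 𝕜'] {f : 𝕜 → 𝕜'}

theorem hasDerivAt_logDeriv {x : 𝕜} (hf : DifferentiableAt 𝕜 f x)
    (hf' : DifferentiableAt 𝕜 (deriv f) x) (h0 : f x ≠ 0) :
    HasDerivAt (logDeriv f) (deriv (deriv f) x / f x - logDeriv f x ^ 2) x := by
  refine (hf'.hasDerivAt.div hf.hasDerivAt h0).congr_deriv ?_
  rw [logDeriv_apply]
  field_simp

theorem contDiffOn_logDeriv {s : Set 𝕜} (hf : ContDiff 𝕜 ∞ f) (h0 : ∀ x ∈ s, f x ≠ 0) :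
    ContDiffOn 𝕜 ∞ (logDeriv f) s := by
  refine ((contDiff_infty_iff_deriv.1 hf).2.contDiffOn.mul (hf.contDiffOn.inv h0)).congr ?_
  exact fun x _ ↦ div_eq_mul_inv _ _

end LogDeriv

theorem exists_pos_lt_div {K : Type*} [Field K] [LinearOrder K] [IsStrictOrderedRing K] {c : K}
    (hc : 0 < c) (M : K) : ∃ ε > 0, M < c / ε := by
  refine ⟨c / (|M| + 1), by positivity, ?_⟩
  rw [div_div_cancel₀ hc.ne']
  exact (le_abs_self M).trans_lt (lt_add_one _)

theorem smoothTransition_one_sub (x : ℝ) :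
    Real.smoothTransition (1 - x) = 1 - Real.smoothTransition x := by
  have hdenom := (Real.smoothTransition.pos_denom x).ne'
  rw [Real.smoothTransition, Real.smoothTransition, sub_sub_cancel,
    add_comm (expNegInvGlue (1 - x)), eq_sub_iff_add_eq, ← add_div, add_comm, div_self hdenom]

section SmoothSign

/-- A smooth odd nondecreasing approximation of the sign function, exact for `0 < r ≤ |t|`. -/
noncomputable def smoothSign (r t : ℝ) : ℝ :=
  2 * Real.smoothTransition ((t / r + 1) / 2) - 1

variable {r t : ℝ}

theorem contDiff_smoothSign (r : ℝ) : ContDiff ℝ ∞ (smoothSign r) := by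
  have harg : ContDiff ℝ ∞ fun t : ℝ ↦ (t / r + 1) / 2 := by fun_prop
  exact (contDiff_const.mul (Real.smoothTransition.contDiff.comp harg)).sub contDiff_const

theorem smoothSign_neg (r t : ℝ) : smoothSign r (-t) = -smoothSign r t := by
  have harg : (-t / r + 1) / 2 = 1 - (t / r + 1) / 2 := by ring
  rw [smoothSign, smoothSign, harg, smoothTransition_one_sub]
  ring

theorem monotone_smoothSign (hr : 0 ≤ r) : Monotone (smoothSign r) := by
  intro x y hxy
  have harg : (x / r + 1) / 2 ≤ (y / r + 1) / 2 := by gcongr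
  unfold smoothSign
  linarith [Real.smoothTransition.monotone harg]

theorem abs_smoothSign_le_one (r t : ℝ) : |smoothSign r t| ≤ 1 := by
  have hnonneg := Real.smoothTransition.nonneg ((t / r + 1) / 2)
  have hle := Real.smoothTransition.le_one ((t / r + 1) / 2)
  unfold smoothSign
  exact abs_le.2 ⟨by linarith, by linarith⟩

theorem smoothSign_of_le (hr : 0 < r) (ht : r ≤ t) : smoothSign r t = 1 := by
  have harg : 1 ≤ (t / r + 1) / 2 := by linarith [(one_le_div hr).2 ht]
  rw [smoothSign, Real.smoothTransition.one_of_one_le harg]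
  norm_num

theorem smoothSign_of_le_neg (hr : 0 < r) (ht : t ≤ -r) : smoothSign r t = -1 := by
  rw [← neg_neg t, smoothSign_neg, smoothSign_of_le hr (le_neg_of_le_neg ht)]

theorem deriv_smoothSign_nonneg (hr : 0 ≤ r) (t : ℝ) : 0 ≤ deriv (smoothSign r) t :=
  (monotone_smoothSign hr).deriv_nonneg

theorem deriv_smoothSign_eq_zero (hr : 0 < r) (ht : r ≤ |t|) : deriv (smoothSign r) t = 0 := by
  have hbound (x : ℝ) := abs_le.1 (abs_smoothSign_le_one r x)
  rcases le_abs'.1 ht with hneg | hpos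
  · have hmin : IsLocalMin (smoothSign r) t := Eventually.of_forall fun x ↦ by
      rw [smoothSign_of_le_neg hr hneg]
      exact (hbound x).1
    exact hmin.deriv_eq_zero
  · have hmax : IsLocalMax (smoothSign r) t := Eventually.of_forall fun x ↦ by
      rw [smoothSign_of_le hr hpos]
      exact (hbound x).2
    exact hmax.deriv_eq_zero

end SmoothSign

section SmoothAbs

/-- A smooth convex approximation of the absolute value, exact for `0 < r ≤ |t|`: the primitive of
`smoothSign r` with value `r` at `r`. -/
noncomputable def smoothAbs (r t : ℝ) : ℝ :=
  r + ∫ x in r..t, smoothSign r x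

variable {r t : ℝ}

theorem hasDerivAt_smoothAbs (r t : ℝ) : HasDerivAt (smoothAbs r) (smoothSign r t) t :=
  ((contDiff_smoothSign r).continuous.integral_hasStrictDerivAt r t).hasDerivAt.const_add r

theorem deriv_smoothAbs (r : ℝ) : deriv (smoothAbs r) = smoothSign r :=
  funext fun t ↦ (hasDerivAt_smoothAbs r t).deriv

theorem contDiff_smoothAbs (r : ℝ) : ContDiff ℝ ∞ (smoothAbs r) :=
  contDiff_infty_iff_deriv.2 ⟨fun t ↦ (hasDerivAt_smoothAbs r t).differentiableAt,
    (deriv_smoothAbs r).symm ▸ contDiff_smoothSign r⟩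

theorem convexOn_smoothAbs (hr : 0 ≤ r) : ConvexOn ℝ univ (smoothAbs r) := by
  refine Monotone.convexOn_univ_of_deriv (fun t ↦ (hasDerivAt_smoothAbs r t).differentiableAt) ?_
  rw [deriv_smoothAbs]
  exact monotone_smoothSign hr

theorem smoothAbs_neg (r t : ℝ) : smoothAbs r (-t) = smoothAbs r t := by
  have hderiv (x : ℝ) : HasDerivAt (fun y ↦ smoothAbs r (-y) - smoothAbs r y) 0 x := by
    have hneg := (hasDerivAt_smoothAbs r (-x)).scomp x (hasDerivAt_neg x)
    refine (hneg.sub (hasDerivAt_smoothAbs r x)).congr_deriv ?_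
    simp [smoothSign_neg]
  have hconst := is_const_of_deriv_eq_zero (fun x ↦ (hderiv x).differentiableAt)
    (fun x ↦ (hderiv x).deriv) t 0
  simpa [sub_eq_zero] using hconst

theorem smoothAbs_of_le_abs (hr : 0 < r) (ht : r ≤ |t|) : smoothAbs r t = |t| := by
  have hone : EqOn (smoothSign r) (fun _ ↦ 1) (uIcc r |t|) := fun x hx ↦
    smoothSign_of_le hr (uIcc_of_le ht ▸ hx).1
  have habs : smoothAbs r |t| = |t| := by
    rw [smoothAbs, intervalIntegral.integral_congr hone, integral_one]
    ring
  rcases abs_choice t with h | h <;> rw [h] at habs ⊢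
  · exact habs
  · rwa [smoothAbs_neg] at habs

theorem smoothAbs_le {c : ℝ} (hr : 0 < r) (hc : r ≤ c) (ht : |t| ≤ c) : smoothAbs r t ≤ c := by
  have hcabs : |c| = c := abs_of_pos (hr.trans_le hc)
  have hend : smoothAbs r c = c := by rw [smoothAbs_of_le_abs hr (hcabs.symm ▸ hc), hcabs]
  have hmax := (convexOn_smoothAbs hr.le).le_max_of_mem_Icc (mem_univ (-c)) (mem_univ c)
    (abs_le.1 ht)
  rwa [smoothAbs_neg, max_self, hend] at hmax

end SmoothAbs

section SmoothTent

/-- A smooth concave tent, equal to `b - |t|` for `0 < r ≤ |t|`. -/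
noncomputable def smoothTent (r b t : ℝ) : ℝ :=
  b - smoothAbs r t

variable {r b t : ℝ}

theorem contDiff_smoothTent (r b : ℝ) : ContDiff ℝ ∞ (smoothTent r b) :=
  contDiff_const.sub (contDiff_smoothAbs r)

theorem deriv_smoothTent (r b : ℝ) : deriv (smoothTent r b) = -smoothSign r :=
  funext fun t ↦ ((hasDerivAt_smoothAbs r t).const_sub b).deriv

theorem sub_le_smoothTent {c : ℝ} (hr : 0 < r) (hc : r ≤ c) (ht : |t| ≤ c) :
    b - c ≤ smoothTent r b t :=
  sub_le_sub_left (smoothAbs_le hr hc ht) b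

theorem smoothTent_pos {c : ℝ} (hr : 0 < r) (hc : r ≤ c) (hcb : c < b) (ht : t ∈ Icc (-c) c) :
    0 < smoothTent r b t :=
  (sub_pos.2 hcb).trans_le (sub_le_smoothTent hr hc (abs_le.2 ht))

theorem exists_forall_deriv_smoothSign_le_mul_smoothTent {k : ℝ} (hr : 0 < r) (hk : 0 < k) :
    ∃ B, ∀ b ≥ B, ∀ t ∈ Icc (-r) r, deriv (smoothSign r) t ≤ k * smoothTent r b t := by
  obtain ⟨C, hC⟩ := isCompact_Icc.exists_bound_of_continuousOn (s := Icc (-r) r)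
    ((contDiff_smoothSign r).continuous_deriv (by simp)).continuousOn
  refine ⟨r + C / k, fun b hb t ht ↦ ?_⟩
  calc deriv (smoothSign r) t ≤ C := (le_abs_self _).trans (hC t ht)
    _ = k * (C / k) := by field_simp
    _ ≤ k * (b - r) := by gcongr; linarith
    _ ≤ k * smoothTent r b t := by gcongr; exact sub_le_smoothTent hr le_rfl (abs_le.2 ht)

end SmoothTent

section Profile

/-- The smoothed profile `μ = (3/2) v' / v`, where `v = smoothTent r b`. -/
noncomputable def profile (r b t : ℝ) : ℝ :=
  3 / 2 * logDeriv (smoothTent r b) t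

variable {r b t : ℝ}

theorem contDiffOn_profile {s : Set ℝ} (h0 : ∀ t ∈ s, smoothTent r b t ≠ 0) :
    ContDiffOn ℝ ∞ (profile r b) s :=
  contDiffOn_const.mul (contDiffOn_logDeriv (contDiff_smoothTent r b) h0)

theorem hasDerivAt_profile (h0 : smoothTent r b t ≠ 0) :
    HasDerivAt (profile r b)
      (-(3 / 2) * (deriv (smoothSign r) t / smoothTent r b t) - 2 / 3 * profile r b t ^ 2) t := by
  have hv := contDiff_infty_iff_deriv.1 (contDiff_smoothTent r b)
  have hlog := hasDerivAt_logDeriv (hv.1 t) (hv.2.differentiable (by simp) t) h0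
  refine (hlog.const_mul (3 / 2)).congr_deriv ?_
  rw [deriv_smoothTent, deriv.neg, profile]
  ring

theorem derivWithin_profile_nonpos {s : Set ℝ} (hr : 0 ≤ r) (hs : UniqueDiffWithinAt ℝ s t)
    (h0 : 0 < smoothTent r b t) : derivWithin (profile r b) s t ≤ 0 := by
  rw [(hasDerivAt_profile h0.ne').hasDerivWithinAt.derivWithin hs]
  have hquot := div_nonneg (deriv_smoothSign_nonneg hr t) h0.le
  linarith [sq_nonneg (profile r b t)]

theorem riccati_profile_eq {s : Set ℝ} (hs : UniqueDiffWithinAt ℝ s t)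
    (h0 : smoothTent r b t ≠ 0) :
    -(4 / 3) * profile r b t ^ 2 - 2 * derivWithin (profile r b) s t =
      3 * (deriv (smoothSign r) t / smoothTent r b t) := by
  rw [(hasDerivAt_profile h0).hasDerivWithinAt.derivWithin hs]
  ring

theorem riccati_profile_le {s : Set ℝ} {k : ℝ} (hs : UniqueDiffWithinAt ℝ s t)
    (h0 : 0 < smoothTent r b t) (hk : deriv (smoothSign r) t ≤ k * smoothTent r b t) :
    -(4 / 3) * profile r b t ^ 2 - 2 * derivWithin (profile r b) s t ≤ 3 * k := by
  rw [riccati_profile_eq hs h0.ne']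
  gcongr
  exact (div_le_iff₀ h0).2 hk

theorem riccati_profile_eq_zero {s : Set ℝ} (hr : 0 < r) (ht : r ≤ |t|)
    (hs : UniqueDiffWithinAt ℝ s t) (h0 : smoothTent r b t ≠ 0) :
    -(4 / 3) * profile r b t ^ 2 - 2 * derivWithin (profile r b) s t = 0 := by
  rw [riccati_profile_eq hs h0, deriv_smoothSign_eq_zero hr ht, zero_div, mul_zero]

theorem profile_of_le_abs (hr : 0 < r) (ht : r ≤ |t|) :
    profile r b t = -(3 / 2) * smoothSign r t / (b - |t|) := by
  rw [profile, logDeriv_apply, deriv_smoothTent, smoothTent, smoothAbs_of_le_abs hr ht,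
    Pi.neg_apply]
  ring

theorem profile_of_le (hr : 0 < r) (ht : r ≤ t) : profile r b t = -(3 / 2) / (b - t) := by
  have habs : |t| = t := abs_of_pos (hr.trans_le ht)
  rw [profile_of_le_abs hr (habs.symm ▸ ht), smoothSign_of_le hr ht, habs]
  ring

theorem profile_of_le_neg (hr : 0 < r) (ht : t ≤ -r) : profile r b t = 3 / 2 / (b + t) := by
  have habs : |t| = -t := abs_of_neg (by linarith)
  rw [profile_of_le_abs hr (by linarith), smoothSign_of_le_neg hr ht, habs]
  ring

end Profile

/-- Existence of the smoothed profile function `μ_κ`: for every `κ > 0`,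
`T > 0` and prescribed mean-curvature bounds `H₋, H₊`, there are `α < −T`,
`β > T` and a smooth nonincreasing function `μ` on `[α, β]` with
`μ(α) > H₋`, `μ(β) < H₊`, satisfying `−(4/3) μ² − 2 μ' ≤ 12κ` on `(−T, T)`
and `−(4/3) μ² − 2 μ' ≤ 0` on `[α, −T] ∪ [T, β]`. -/
theorem stmt_8 (κ : ℝ) (hκ : 0 < κ) (T : ℝ) (hT : 0 < T) (Hneg Hpos : ℝ) :
    ∃ α β : ℝ, ∃ μ : ℝ → ℝ,
      α < -T ∧ T < β ∧
      ContDiffOn ℝ (⊤ : ℕ∞) μ (Set.Icc α β) ∧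
      (∀ t ∈ Set.Icc α β, derivWithin μ (Set.Icc α β) t ≤ 0) ∧
      Hneg < μ α ∧ μ β < Hpos ∧
      (∀ t ∈ Set.Ioo (-T) T,
        -(4/3) * (μ t)^2 - 2 * derivWithin μ (Set.Icc α β) t ≤ 12 * κ) ∧
      (∀ t ∈ Set.Icc α (-T) ∪ Set.Icc T β,
        -(4/3) * (μ t)^2 - 2 * derivWithin μ (Set.Icc α β) t ≤ 0) := by
  obtain ⟨B, hB⟩ := exists_forall_deriv_smoothSign_le_mul_smoothTent hT (k := 4 * κ) (by positivity)
  obtain ⟨β, hβ⟩ := exists_gt (max B T)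
  obtain ⟨hBβ, hTβ⟩ := max_lt_iff.1 hβ
  obtain ⟨ε, hε, hbarrier⟩ := exists_pos_lt_div (c := 3 / 2) (by norm_num) (max Hneg (-Hpos))
  obtain ⟨hneg, hpos⟩ := max_lt_iff.1 hbarrier
  have hud := uniqueDiffOn_Icc (show -β < β by linarith)
  have htent : ∀ t ∈ Icc (-β) β, 0 < smoothTent T (β + ε) t := fun t ht ↦
    smoothTent_pos hT hTβ.le (lt_add_of_pos_right β hε) ht
  refine ⟨-β, β, profile T (β + ε), neg_lt_neg hTβ, hTβ,
    contDiffOn_profile fun t ht ↦ (htent t ht).ne',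
    fun t ht ↦ derivWithin_profile_nonpos hT.le (hud t ht) (htent t ht), ?_, ?_,
    fun t ht ↦ ?_, fun t ht ↦ ?_⟩
  · rwa [profile_of_le_neg hT (neg_le_neg hTβ.le), ← sub_eq_add_neg, add_sub_cancel_left]
  · rwa [profile_of_le hT hTβ.le, add_sub_cancel_left, neg_div, neg_lt]
  · have htβ : t ∈ Icc (-β) β := ⟨by linarith [ht.1], by linarith [ht.2]⟩
    have hk := hB (β + ε) (by linarith) t (Ioo_subset_Icc_self ht)
    linarith [riccati_profile_le (hud t htβ) (htent t htβ) hk]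
  · have htβ : t ∈ Icc (-β) β := by grind
    have hout : T ≤ |t| := le_abs'.2 (ht.imp And.right And.left)
    exact (riccati_profile_eq_zero hT hout (hud t htβ) (htent t htβ).ne').le
end
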